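/- (Equivalence of AGP on uni-monotone polygons and guarding the lower chain from the top edge) For a uni-monotone polygon P with top edge H and lower chain LC, a set G ⊆ H covers P if and only if it covers LC: for every G ⊆ H, P ⊆ ⋃_{g∈G} V(g) ↔ LC ⊆ ⋃_{g∈G} V(g). -/

import Mathlib

open Set

/-- The lower chain: union of the closed segments `[v i, v (i+1)]`, `i = 0, …, n-2`. -/
def lowerChain (n : ℕ) (hn : 2 ≤ n) (v : Fin n → ℝ × ℝ) : Set (ℝ × ℝ) :=
  ⋃ i : Fin (n - 1), segment ℝ (v (Fin.castLE (by omega) i)) (v (Fin.cast (by omega) i.succ))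

/-- The uni-monotone polygon determined by the lower chain and the top height `h`. -/
def uniPoly (n : ℕ) (hn : 2 ≤ n) (v : Fin n → ℝ × ℝ) (h : ℝ) : Set (ℝ × ℝ) :=
  {p : ℝ × ℝ | (v ⟨0, by omega⟩).1 ≤ p.1 ∧ p.1 ≤ (v ⟨n - 1, by omega⟩).1 ∧ p.2 ≤ h ∧
    ∀ t ∈ lowerChain n hn v, t.1 = p.1 → t.2 ≤ p.2}

/-- The top edge: the closed segment from `v 0` to `v (n-1)`. -/
def topEdge (n : ℕ) (hn : 2 ≤ n) (v : Fin n → ℝ × ℝ) : Set (ℝ × ℝ) :=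
  segment ℝ (v ⟨0, by omega⟩) (v ⟨n - 1, by omega⟩)

/-- `p` sees `q` within `S`: the closed segment `[p,q]` is contained in `S`. -/
def seesIn (S : Set (ℝ × ℝ)) (p q : ℝ × ℝ) : Prop := segment ℝ p q ⊆ S

/-- Visibility polygon of `p` within `S`. -/
def visIn (S : Set (ℝ × ℝ)) (p : ℝ × ℝ) : Set (ℝ × ℝ) := {q | q ∈ S ∧ seesIn S p q}

/-!
Visibility moves up vertical lines. If `g` sees a point `q` of the chain and `p` lies vertically
above `q`, then each point of `[g, p]` lies vertically above a point of `[g, q]`, hence above the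
chain, while convexity of the half-plane below the top edge keeps `[g, p]` under that edge. So a
guard that sees the chain point below `p` also sees `p`.
-/

section SegmentsOverTheLine

variable {𝕜 E : Type*} [Field 𝕜] [LinearOrder 𝕜] [IsStrictOrderedRing 𝕜] [AddCommGroup E]
  [Module 𝕜 E]

lemma fst_mem_Icc_of_mem_segment {p q a : 𝕜 × E} (hpq : p.1 ≤ q.1) (ha : a ∈ segment 𝕜 p q) :
    a.1 ∈ Icc p.1 q.1 :=
  segment_eq_Icc hpq ▸ (Prod.segment_subset p q ha).1

lemma exists_mem_segment_fst_eq {p q : 𝕜 × E} {x : 𝕜} (hx : x ∈ Icc p.1 q.1) :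
    ∃ a ∈ segment 𝕜 p q, a.1 = x := by
  have himage : Prod.fst '' segment 𝕜 p q = segment 𝕜 p.1 q.1 :=
    image_segment 𝕜 (LinearMap.fst 𝕜 𝕜 E).toAffineMap p q
  rwa [← segment_eq_Icc (hx.1.trans hx.2), ← himage] at hx

lemma injOn_fst_segment {p q : 𝕜 × E} (hpq : p.1 ≠ q.1) : InjOn Prod.fst (segment 𝕜 p q) := by
  rw [segment_eq_image_lineMap]
  rintro _ ⟨s, -, rfl⟩ _ ⟨t, -, rfl⟩ hst
  rw [AffineMap.fst_lineMap, AffineMap.fst_lineMap] at hst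
  rw [AffineMap.lineMap_injective 𝕜 hpq hst]

lemma eq_of_mem_segment_covBy_of_fst_eq {ι : Type*} [LinearOrder ι] {v : ι → 𝕜 × E}
    (hv : StrictMono fun i ↦ (v i).1) {i j k l : ι} (hij : i ⋖ j) (hkl : k ⋖ l) {a b : 𝕜 × E}
    (ha : a ∈ segment 𝕜 (v i) (v j)) (hb : b ∈ segment 𝕜 (v k) (v l)) (hab : a.1 = b.1) :
    a = b := by
  wlog hik : i ≤ k generalizing i j k l a b
  · exact (this hkl hij hb ha hab.symm (le_of_not_ge hik)).symm
  have hvij : (v i).1 < (v j).1 := hv hij.lt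
  have hvkl : (v k).1 < (v l).1 := hv hkl.lt
  rcases hik.eq_or_lt with rfl | hik
  · obtain rfl := hij.unique_right hkl
    exact injOn_fst_segment hvij.ne ha hb hab
  · have haj : a.1 ≤ (v j).1 := (fst_mem_Icc_of_mem_segment hvij.le ha).2
    have hkb : (v k).1 ≤ b.1 := (fst_mem_Icc_of_mem_segment hvkl.le hb).1
    obtain rfl : j = k := (hij.ge_of_gt hik).antisymm (hv.le_iff_le.1 (by linarith))
    have ha_eq : a = v j :=
      injOn_fst_segment hvij.ne ha (right_mem_segment 𝕜 _ _) (by linarith)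
    have hb_eq : b = v j :=
      injOn_fst_segment hvkl.ne hb (left_mem_segment 𝕜 _ _) (by linarith)
    rw [ha_eq, hb_eq]

end SegmentsOverTheLine

lemma exists_covBy_mem_Icc {ι α : Type*} [LinearOrder ι] [LocallyFiniteOrder ι] [LinearOrder α]
    {f : ι → α} {a b : ι} (hab : a < b) {x : α} (hx : x ∈ Icc (f a) (f b)) :
    ∃ i j, i ⋖ j ∧ x ∈ Icc (f i) (f j) := by
  obtain ⟨i, ⟨hib, hix⟩, hmax⟩ :=
    ((finite_Ico a b).inter_of_left {i | f i ≤ x}).exists_maximal ⟨a, ⟨le_rfl, hab⟩, hx.1⟩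
  obtain ⟨j, hij, hjb⟩ := exists_covBy_le_of_lt hib.2
  refine ⟨i, j, hij, hix, ?_⟩
  rcases hjb.eq_or_lt with rfl | hjb
  · exact hx.2
  · by_contra! hxj
    exact hij.lt.not_ge (hmax ⟨⟨hib.1.trans hij.le, hjb⟩, hxj.le⟩ hij.le)

section LowerChain

variable {n : ℕ} {hn : 2 ≤ n} {v : Fin n → ℝ × ℝ} {h : ℝ}

lemma mem_lowerChain_iff_exists_covBy {t : ℝ × ℝ} :
    t ∈ lowerChain n hn v ↔ ∃ i j, i ⋖ j ∧ t ∈ segment ℝ (v i) (v j) := by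
  simp only [lowerChain, mem_iUnion]
  constructor
  · rintro ⟨i, ht⟩
    exact ⟨_, _, by simp [Fin.covBy_iff], ht⟩
  · rintro ⟨⟨i, hi⟩, ⟨j, hj⟩, hij, ht⟩
    obtain rfl : i + 1 = j := by simpa using hij
    exact ⟨⟨i, by omega⟩, ht⟩

lemma exists_mem_lowerChain_fst_eq {x : ℝ}
    (hx : x ∈ Icc (v ⟨0, by omega⟩).1 (v ⟨n - 1, by omega⟩).1) :
    ∃ t ∈ lowerChain n hn v, t.1 = x := by
  obtain ⟨i, j, hij, hxij⟩ :=
    exists_covBy_mem_Icc (f := fun i ↦ (v i).1) (Fin.mk_lt_mk.2 (by omega)) hx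
  obtain ⟨t, ht, htx⟩ := exists_mem_segment_fst_eq hxij
  exact ⟨t, mem_lowerChain_iff_exists_covBy.2 ⟨i, j, hij, ht⟩, htx⟩

lemma injOn_fst_lowerChain (hv : StrictMono fun i ↦ (v i).1) :
    InjOn Prod.fst (lowerChain n hn v) := by
  intro a ha b hb hab
  obtain ⟨i, j, hij, ha⟩ := mem_lowerChain_iff_exists_covBy.1 ha
  obtain ⟨k, l, hkl, hb⟩ := mem_lowerChain_iff_exists_covBy.1 hb
  exact eq_of_mem_segment_covBy_of_fst_eq hv hij hkl ha hb hab

lemma lowerChain_subset_uniPoly (hv : StrictMono fun i ↦ (v i).1) (hbelow : ∀ i, (v i).2 ≤ h) :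
    lowerChain n hn v ⊆ uniPoly n hn v h := by
  intro t ht
  obtain ⟨i, j, hij, hts⟩ := mem_lowerChain_iff_exists_covBy.1 ht
  obtain ⟨hit, htj⟩ := fst_mem_Icc_of_mem_segment (hv hij.lt).le hts
  have hfirst : (v ⟨0, by omega⟩).1 ≤ (v i).1 :=
    hv.monotone (Fin.le_def.2 (Nat.zero_le _))
  have hlast : (v j).1 ≤ (v ⟨n - 1, by omega⟩).1 :=
    hv.monotone (Fin.le_def.2 (Nat.le_sub_one_of_lt j.2))
  have hth : t.2 ≤ h :=
    (convex_Iic h).segment_subset (hbelow i) (hbelow j) (Prod.segment_subset _ _ hts).2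
  exact ⟨hfirst.trans hit, htj.trans hlast, hth,
    fun u hu hut ↦ (congrArg Prod.snd (injOn_fst_lowerChain hv hu ht hut)).le⟩

end LowerChain

section Visibility

variable {U K : Set (ℝ × ℝ)}

lemma seesIn_inter_of_le (hU : ∀ x, IsUpperSet {y | (x, y) ∈ U}) (hK : Convex ℝ K)
    {g q p : ℝ × ℝ} (hgq : seesIn (U ∩ K) g q) (hp : p ∈ K) (hfst : q.1 = p.1)
    (hsnd : q.2 ≤ p.2) : seesIn (U ∩ K) g p := by
  have hg : g ∈ K := (hgq (left_mem_segment ℝ g q)).2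
  rintro _ ⟨s, t, hs, ht, hst, rfl⟩
  have hgqU : s • g + t • q ∈ U := (hgq ⟨s, t, hs, ht, hst, rfl⟩).1
  have hvertical : s • g + t • p = ((s • g + t • q).1, (s • g + t • p).2) := by
    ext <;> simp [hfst]
  have hheight : (s • g + t • q).2 ≤ (s • g + t • p).2 := by
    simp only [Prod.snd_add, Prod.smul_snd]
    gcongr
  exact ⟨hvertical ▸ hU _ hheight hgqU, hK hg hp hs ht hst⟩

theorem subset_biUnion_visIn_inter_iff (hU : ∀ x, IsUpperSet {y | (x, y) ∈ U}) (hK : Convex ℝ K)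
    {L : Set (ℝ × ℝ)} (hL : L ⊆ U ∩ K)
    (hbelow : ∀ p ∈ U ∩ K, ∃ q ∈ L, q.1 = p.1 ∧ q.2 ≤ p.2) (G : Set (ℝ × ℝ)) :
    U ∩ K ⊆ ⋃ g ∈ G, visIn (U ∩ K) g ↔ L ⊆ ⋃ g ∈ G, visIn (U ∩ K) g := by
  refine ⟨hL.trans, fun hcover p hp ↦ ?_⟩
  obtain ⟨q, hqL, hfst, hsnd⟩ := hbelow p hp
  obtain ⟨g, hgG, -, hgq⟩ := mem_iUnion₂.1 (hcover hqL)
  exact mem_iUnion₂.2 ⟨g, hgG, hp, seesIn_inter_of_le hU hK hgq hp.2 hfst hsnd⟩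

end Visibility

/-- The unbounded region above the lower chain: the part of the vertical strip between the first
and the last vertex that lies on or above the chain. Cutting it off at height `h` gives the
uni-monotone polygon. -/
def regionAboveChain (n : ℕ) (hn : 2 ≤ n) (v : Fin n → ℝ × ℝ) : Set (ℝ × ℝ) :=
  {p | p.1 ∈ Icc (v ⟨0, by omega⟩).1 (v ⟨n - 1, by omega⟩).1 ∧
    ∀ t ∈ lowerChain n hn v, t.1 = p.1 → t.2 ≤ p.2}

lemma uniPoly_eq_inter (n : ℕ) (hn : 2 ≤ n) (v : Fin n → ℝ × ℝ) (h : ℝ) :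
    uniPoly n hn v h = regionAboveChain n hn v ∩ Prod.snd ⁻¹' Iic h :=
  Subset.antisymm (fun _ ⟨hfirst, hlast, htop, habove⟩ ↦ ⟨⟨⟨hfirst, hlast⟩, habove⟩, htop⟩)
    fun _ ⟨⟨⟨hfirst, hlast⟩, habove⟩, htop⟩ ↦ ⟨hfirst, hlast, htop, habove⟩

lemma isUpperSet_regionAboveChain (n : ℕ) (hn : 2 ≤ n) (v : Fin n → ℝ × ℝ) (x : ℝ) :
    IsUpperSet {y | (x, y) ∈ regionAboveChain n hn v} :=
  fun _ _ hyz hy ↦ ⟨hy.1, fun t ht htx ↦ (hy.2 t ht htx).trans hyz⟩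

theorem stmt_15_general (n : ℕ) (hn : 2 ≤ n) (v : Fin n → ℝ × ℝ)
    (hmono : ∀ i j : Fin n, i < j → (v i).1 < (v j).1)
    (h : ℝ) (hbelow : ∀ i : Fin n, (v i).2 ≤ h) (G : Set (ℝ × ℝ)) :
    uniPoly n hn v h ⊆ (⋃ g ∈ G, visIn (uniPoly n hn v h) g) ↔
      lowerChain n hn v ⊆ ⋃ g ∈ G, visIn (uniPoly n hn v h) g := by
  have hchain : lowerChain n hn v ⊆ uniPoly n hn v h :=
    lowerChain_subset_uniPoly (fun i j ↦ hmono i j) hbelow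
  rw [uniPoly_eq_inter] at hchain ⊢
  refine subset_biUnion_visIn_inter_iff (isUpperSet_regionAboveChain n hn v)
    ((convex_Iic h).linear_preimage (LinearMap.snd ℝ ℝ ℝ)) hchain (fun p hp ↦ ?_) G
  obtain ⟨q, hq, hqp⟩ := exists_mem_lowerChain_fst_eq hp.1.1
  exact ⟨q, hq, hqp, hp.1.2 q hq hqp⟩

theorem stmt_15 (n : ℕ) (hn : 2 ≤ n) (v : Fin n → ℝ × ℝ)
    (hmono : ∀ i j : Fin n, i < j → (v i).1 < (v j).1)
    (h : ℝ) (h0 : (v ⟨0, by omega⟩).2 = h) (hlast : (v ⟨n - 1, by omega⟩).2 = h)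
    (hbelow : ∀ i : Fin n, (v i).2 ≤ h)
    (G : Set (ℝ × ℝ)) (hGH : G ⊆ topEdge n hn v) :
    uniPoly n hn v h ⊆ (⋃ g ∈ G, visIn (uniPoly n hn v h) g) ↔
      lowerChain n hn v ⊆ ⋃ g ∈ G, visIn (uniPoly n hn v h) g :=
  stmt_15_general n hn v hmono h hbelow G
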